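/- arXiv:2310.02012 — 2 statements merged into one kernel-verified Lean document; each statement's English description precedes it below -/
import Mathlib

section
/- Let d ≥ 2 and let X ∈ ℝ^{d×d} be a nonsingular matrix whose rows all have unit Euclidean norm (i.e., X is in the image of BN). Let λ_1, …, λ_d be the eigenvalues of XXᵀ, and let W be a random matrix distributed according to the Haar probability measure on the orthogonal group O(d). Then E_W[ I(BN(WX)) ] ≥ ( 1 − Σ_{k=1}^d (λ_k − 1)² / (2d²(d+2)) )^{−1} · I(X), with equality when X is orthogonal. -/
open MeasureTheory Matrix

/-- Euclidean norm of the `i`-th row of a square real matrix. -/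
noncomputable def rowNorm {d : ℕ} (X : Matrix (Fin d) (Fin d) ℝ) (i : Fin d) : ℝ :=
  Real.sqrt (∑ j, X i j ^ 2)

/-- Batch normalization (without mean reduction): each row is rescaled to unit norm. -/
noncomputable def BN {d : ℕ} (X : Matrix (Fin d) (Fin d) ℝ) : Matrix (Fin d) (Fin d) ℝ :=
  Matrix.of fun i j => X i j / rowNorm X i

/-- Isometry gap `φ(X) = -log( det(XᵀX)^{1/d} / ((1/d) Tr(XᵀX)) )`. -/
noncomputable def isoGap {d : ℕ} (X : Matrix (Fin d) (Fin d) ℝ) : ℝ :=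
  - Real.log ((Xᵀ * X).det ^ ((1 : ℝ) / d) / ((1 / d : ℝ) * (Xᵀ * X).trace))

/-- Isometry `I(X) = exp(-φ(X))`. -/
noncomputable def isoI {d : ℕ} (X : Matrix (Fin d) (Fin d) ℝ) : ℝ :=
  Real.exp (- isoGap X)

/-- Matrices inherit the (Borel) product measurable structure of `Fin d → Fin d → ℝ`. -/
instance matrixMeasurableSpace {d : ℕ} : MeasurableSpace (Matrix (Fin d) (Fin d) ℝ) :=
  (inferInstance : MeasurableSpace (Fin d → Fin d → ℝ))

/-- `μ` is the Haar probability measure on the orthogonal group `O(d)`, viewed as a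
measure on `d × d` real matrices: it is a probability measure, concentrated on the
orthogonal matrices, and invariant under left and right translation by any orthogonal
matrix (these properties characterize the Haar probability measure uniquely). -/
def IsHaarOrthogonal {d : ℕ} (μ : Measure (Matrix (Fin d) (Fin d) ℝ)) : Prop :=
  IsProbabilityMeasure μ ∧
  (∀ᵐ W ∂μ, Wᵀ * W = 1) ∧
  ∀ U : Matrix (Fin d) (Fin d) ℝ, Uᵀ * U = 1 →
    μ.map (fun W => U * W) = μ ∧ μ.map (fun W => W * U) = μ

lemma log_le_sub_sq {D x : ℝ} (hD : 1 ≤ D) (hx : 0 < x) (hxD : x ≤ D) :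
    Real.log x ≤ (x - 1) - (x - 1) ^ 2 / (2 * D) := by
  let f : ℝ → ℝ := fun t => (t - 1) - (t - 1) ^ 2 / (2 * D) - Real.log t
  have hD0 : 0 < D := by linarith
  have hder : ∀ t, 0 < t → HasDerivAt f ((t - 1) * (1 / t - 1 / D)) t := fun t ht => by
    have h := ((((hasDerivAt_id t).sub_const 1).sub
      ((((hasDerivAt_id t).sub_const 1).pow 2).div_const (2 * D))).sub
        (Real.hasDerivAt_log ht.ne'))
    refine h.congr_deriv ?_
    simp only [id]
    field_simp
    ring
  have hf1 : f 1 = 0 := by simp [f]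
  suffices h : 0 ≤ f x by simp only [f] at h; linarith
  rcases le_total x 1 with h1 | h1
  · have hanti : AntitoneOn f (Set.Icc x 1) := by
      refine antitoneOn_of_hasDerivWithinAt_nonpos (convex_Icc x 1)
        (fun t ht => (hder t (hx.trans_le ht.1)).continuousAt.continuousWithinAt)
        (fun t ht => (hder t ?_).hasDerivWithinAt) fun t ht => ?_
      · rw [interior_Icc] at ht; exact hx.trans ht.1
      · rw [interior_Icc] at ht
        refine mul_nonpos_of_nonpos_of_nonneg (by linarith [ht.2]) (sub_nonneg.2 ?_)
        exact one_div_le_one_div_of_le (hx.trans ht.1) (ht.2.le.trans hD)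
    simpa [hf1] using hanti (Set.left_mem_Icc.2 h1) (Set.right_mem_Icc.2 h1) h1
  · have hmono : MonotoneOn f (Set.Icc 1 x) := by
      refine monotoneOn_of_hasDerivWithinAt_nonneg (convex_Icc 1 x)
        (fun t ht => (hder t (by linarith [ht.1])).continuousAt.continuousWithinAt)
        (fun t ht => (hder t ?_).hasDerivWithinAt) fun t ht => ?_
      · rw [interior_Icc] at ht; linarith [ht.1]
      · rw [interior_Icc] at ht
        refine mul_nonneg (by linarith [ht.1]) (sub_nonneg.2 ?_)
        exact one_div_le_one_div_of_le (by linarith [ht.1]) (ht.2.le.trans hxD)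
    simpa [hf1] using hmono (Set.left_mem_Icc.2 h1) (Set.right_mem_Icc.2 h1) h1

/-- A quadratic strengthening of the inequality between geometric and arithmetic means. -/
lemma one_add_sum_sq_le_prod_inv_rpow {d : ℕ} (hd : 1 ≤ d) {s : Fin d → ℝ} (hs : ∀ i, 0 < s i)
    (hsum : ∑ i, s i = d) :
    1 + (∑ i, (s i - 1) ^ 2) / (2 * (d : ℝ) ^ 2) ≤ (∏ i, (s i)⁻¹) ^ ((1 : ℝ) / d) := by
  have hd1 : (1 : ℝ) ≤ d := by exact_mod_cast hd
  have hle : ∀ i, s i ≤ d := fun i => by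
    rw [← hsum]
    exact Finset.single_le_sum (fun j _ => (hs j).le) (Finset.mem_univ i)
  have hlog : ∑ i, Real.log (s i) ≤ -((∑ i, (s i - 1) ^ 2) / (2 * d)) := by
    calc ∑ i, Real.log (s i) ≤ ∑ i, ((s i - 1) - (s i - 1) ^ 2 / (2 * d)) :=
          Finset.sum_le_sum fun i _ => log_le_sub_sq hd1 (hs i) (hle i)
      _ = _ := by
          rw [Finset.sum_sub_distrib, Finset.sum_sub_distrib, hsum, ← Finset.sum_div]
          simp
  have hpos : 0 < ∏ i, (s i)⁻¹ := Finset.prod_pos fun i _ => inv_pos.2 (hs i)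
  rw [Real.rpow_def_of_pos hpos, Real.log_prod fun i _ => (inv_pos.2 (hs i)).ne']
  simp only [Real.log_inv, Finset.sum_neg_distrib]
  refine le_trans ?_ (Real.add_one_le_exp _)
  have : (∑ i, (s i - 1) ^ 2) / (2 * (d : ℝ) ^ 2) =
      (∑ i, (s i - 1) ^ 2) / (2 * d) * (1 / d) := by field_simp
  rw [this, add_comm]
  gcongr
  linarith

section Isometry

variable {d : ℕ}

lemma isoI_pos (Y : Matrix (Fin d) (Fin d) ℝ) : 0 < isoI Y :=
  Real.exp_pos _

lemma isoI_eq_of_unit_rows (hd : 1 ≤ d) {Y : Matrix (Fin d) (Fin d) ℝ} (hY : Y.det ≠ 0)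
    (hrows : ∀ i, ∑ j, Y i j ^ 2 = 1) : isoI Y = (Y.det ^ 2) ^ ((1 : ℝ) / d) := by
  have htr : (Yᵀ * Y).trace = d := by
    rw [Matrix.trace_mul_comm]
    simp [Matrix.trace, Matrix.mul_apply, ← sq, hrows]
  have hd0 : (d : ℝ) ≠ 0 := by positivity
  rw [isoI, isoGap, neg_neg, htr, one_div_mul_cancel hd0, div_one, Matrix.det_mul,
    Matrix.det_transpose, ← sq, Real.exp_log]
  positivity

lemma isoI_le_one_of_unit_rows (hd : 1 ≤ d) {Y : Matrix (Fin d) (Fin d) ℝ} (hY : Y.det ≠ 0)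
    (hrows : ∀ i, ∑ j, Y i j ^ 2 = 1) : isoI Y ≤ 1 := by
  have hd0 : (d : ℝ) ≠ 0 := by positivity
  have hpsd : (Y * Yᵀ).PosSemidef := by
    simpa using Matrix.posSemidef_self_mul_conjTranspose Y
  have htr : ∑ i, hpsd.1.eigenvalues i = d := by
    have := hpsd.1.trace_eq_sum_eigenvalues
    simp only [RCLike.ofReal_real_eq_id, id] at this
    rw [← this]
    simp [Matrix.trace, Matrix.mul_apply, ← sq, hrows]
  have hdet : ∏ i, hpsd.1.eigenvalues i = Y.det ^ 2 := by
    have := hpsd.1.det_eq_prod_eigenvalues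
    simp only [RCLike.ofReal_real_eq_id, id] at this
    rw [← this, Matrix.det_mul, Matrix.det_transpose, sq]
  rw [isoI_eq_of_unit_rows hd hY hrows, ← hdet,
    ← Real.finsetProd_rpow _ _ fun i _ => hpsd.eigenvalues_nonneg i]
  refine (Real.geom_mean_le_arith_mean_weighted _ (fun _ => (1 : ℝ) / d) _
    (fun _ _ => by positivity) (by simp [hd0]) fun i _ => hpsd.eigenvalues_nonneg i).trans_eq ?_
  rw [← Finset.mul_sum, htr, one_div_mul_cancel hd0]

lemma sum_row_sq_pos {Y : Matrix (Fin d) (Fin d) ℝ} (hY : Y.det ≠ 0) (i : Fin d) :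
    0 < ∑ j, Y i j ^ 2 := by
  refine lt_of_le_of_ne (Finset.sum_nonneg fun j _ => sq_nonneg _) fun h => hY ?_
  refine Matrix.det_eq_zero_of_row_eq_zero i fun j => ?_
  have := (Finset.sum_eq_zero_iff_of_nonneg fun j _ => sq_nonneg (Y i j)).1 h.symm j
    (Finset.mem_univ j)
  exact pow_eq_zero_iff two_ne_zero |>.1 this

lemma rowNorm_pos {Y : Matrix (Fin d) (Fin d) ℝ} (hY : Y.det ≠ 0) (i : Fin d) :
    0 < rowNorm Y i :=
  Real.sqrt_pos.2 (sum_row_sq_pos hY i)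

lemma rowNorm_sq (Y : Matrix (Fin d) (Fin d) ℝ) (i : Fin d) :
    rowNorm Y i ^ 2 = ∑ j, Y i j ^ 2 :=
  Real.sq_sqrt (Finset.sum_nonneg fun _ _ => sq_nonneg _)

lemma det_BN (Y : Matrix (Fin d) (Fin d) ℝ) :
    (BN Y).det = (∏ i, (rowNorm Y i)⁻¹) * Y.det := by
  rw [← Matrix.det_mul_column]
  simp [BN, div_eq_inv_mul]

lemma det_BN_ne_zero {Y : Matrix (Fin d) (Fin d) ℝ} (hY : Y.det ≠ 0) : (BN Y).det ≠ 0 := by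
  rw [det_BN]
  exact mul_ne_zero (Finset.prod_ne_zero_iff.2 fun i _ => (inv_pos.2 (rowNorm_pos hY i)).ne') hY

lemma BN_unit_rows {Y : Matrix (Fin d) (Fin d) ℝ} (hY : Y.det ≠ 0) (i : Fin d) :
    ∑ j, BN Y i j ^ 2 = 1 := by
  simp only [BN, Matrix.of_apply, div_pow, ← Finset.sum_div, ← rowNorm_sq]
  exact div_self (pow_pos (rowNorm_pos hY i) 2).ne'

lemma isoI_BN (hd : 1 ≤ d) {Y : Matrix (Fin d) (Fin d) ℝ} (hY : Y.det ≠ 0) :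
    isoI (BN Y) =
      (∏ i, (∑ j, Y i j ^ 2)⁻¹) ^ ((1 : ℝ) / d) * (Y.det ^ 2) ^ ((1 : ℝ) / d) := by
  rw [isoI_eq_of_unit_rows hd (det_BN_ne_zero hY) (BN_unit_rows hY), det_BN, mul_pow,
    Real.mul_rpow (by positivity) (by positivity), ← Finset.prod_pow]
  simp only [inv_pow, rowNorm_sq]

lemma measurable_matrix_entry (i j : Fin d) :
    Measurable fun W : Matrix (Fin d) (Fin d) ℝ => W i j :=
  (measurable_pi_apply j).comp (measurable_pi_apply i)

lemma measurable_isoI_BN_mul (X : Matrix (Fin d) (Fin d) ℝ) :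
    Measurable fun W : Matrix (Fin d) (Fin d) ℝ => isoI (BN (W * X)) := by
  have he := measurable_matrix_entry (d := d)
  have hB : ∀ i j, Measurable fun W : Matrix (Fin d) (Fin d) ℝ => BN (W * X) i j := by
    intro i j
    simp only [BN, rowNorm, Matrix.of_apply, Matrix.mul_apply]
    fun_prop
  simp only [isoI, isoGap, Matrix.det_apply, Matrix.trace, Matrix.diag, Matrix.mul_apply,
    Matrix.transpose_apply]
  fun_prop

end Isometry

section Moments

variable {d : ℕ} {μ : Measure (Matrix (Fin d) (Fin d) ℝ)}

lemma sum_row_sq_of_orthogonal {W : Matrix (Fin d) (Fin d) ℝ} (hW : Wᵀ * W = 1) (i : Fin d) :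
    ∑ j, W i j ^ 2 = 1 := by
  have hW' : W * Wᵀ = 1 := mul_eq_one_comm.1 hW
  have h := congrFun (congrFun hW' i) i
  simpa [Matrix.mul_apply, ← sq] using h

lemma sum_col_sq_of_orthogonal {W : Matrix (Fin d) (Fin d) ℝ} (hW : Wᵀ * W = 1) (j : Fin d) :
    ∑ i, W i j ^ 2 = 1 := by
  have h := congrFun (congrFun hW j) j
  simpa [Matrix.mul_apply, ← sq] using h

lemma abs_entry_le_one_of_orthogonal {W : Matrix (Fin d) (Fin d) ℝ} (hW : Wᵀ * W = 1)
    (i j : Fin d) : |W i j| ≤ 1 := by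
  rw [← sq_le_one_iff_abs_le_one, ← sum_row_sq_of_orthogonal hW i]
  exact Finset.single_le_sum (f := fun j => W i j ^ 2) (fun _ _ => sq_nonneg _)
    (Finset.mem_univ j)

/-- The orthogonal reflection in the hyperplane normal to `u`. -/
noncomputable def reflectionMatrix (u : Fin d → ℝ) : Matrix (Fin d) (Fin d) ℝ :=
  1 - (2 / (u ⬝ᵥ u)) • Matrix.vecMulVec u u

lemma reflectionMatrix_orthogonal {u : Fin d → ℝ} (hu : u ⬝ᵥ u ≠ 0) :
    (reflectionMatrix u)ᵀ * reflectionMatrix u = 1 := by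
  have ht : (reflectionMatrix u)ᵀ = reflectionMatrix u := by
    simp [reflectionMatrix, Matrix.transpose_sub, Matrix.transpose_smul,
      Matrix.transpose_vecMulVec]
  have hsq : Matrix.vecMulVec u u * Matrix.vecMulVec u u = (u ⬝ᵥ u) • Matrix.vecMulVec u u := by
    rw [Matrix.vecMulVec_mul_vecMulVec, Matrix.vecMulVec_smul]
  rw [ht, reflectionMatrix]
  simp only [sub_mul, mul_sub, one_mul, mul_one, smul_mul_assoc, mul_smul_comm, hsq, smul_smul,
    div_mul_cancel₀ (2 : ℝ) hu]
  module

lemma mul_reflectionMatrix_apply (W : Matrix (Fin d) (Fin d) ℝ) (u : Fin d → ℝ) (i j : Fin d) :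
    (W * reflectionMatrix u) i j = W i j - 2 / (u ⬝ᵥ u) * (W i ⬝ᵥ u) * u j := by
  rw [reflectionMatrix, mul_sub, mul_one, mul_smul_comm, Matrix.mul_vecMulVec]
  simp only [Matrix.sub_apply, Matrix.smul_apply, Matrix.vecMulVec_apply, Matrix.mulVec,
    smul_eq_mul, mul_assoc]

namespace IsHaarOrthogonal

lemma integrable (hμ : IsHaarOrthogonal μ) {f : Matrix (Fin d) (Fin d) ℝ → ℝ}
    (hf : Measurable f) (C : ℝ) (hC : ∀ W, Wᵀ * W = 1 → |f W| ≤ C) : Integrable f μ := by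
  have := hμ.1
  refine Integrable.of_bound hf.aestronglyMeasurable C ?_
  filter_upwards [hμ.2.1] with W hW using hC W hW

lemma integral_mul_right (hμ : IsHaarOrthogonal μ) {f : Matrix (Fin d) (Fin d) ℝ → ℝ}
    (hf : Measurable f) {U : Matrix (Fin d) (Fin d) ℝ} (hU : Uᵀ * U = 1) :
    ∫ W, f (W * U) ∂μ = ∫ W, f W ∂μ := by
  have hm : Measurable fun W : Matrix (Fin d) (Fin d) ℝ => W * U := by
    refine measurable_pi_lambda _ fun i => measurable_pi_lambda _ fun j => ?_
    simp only [Matrix.mul_apply]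
    exact Finset.measurable_sum _ fun k _ => (measurable_matrix_entry i k).mul_const _
  conv_rhs => rw [← (hμ.2.2 U hU).2]
  rw [integral_map hm.aemeasurable hf.aestronglyMeasurable]

lemma integrable_sq_mul_sq (hμ : IsHaarOrthogonal μ) (i k l : Fin d) :
    Integrable (fun W => W i k ^ 2 * W i l ^ 2) μ := by
  refine hμ.integrable (((measurable_matrix_entry i k).pow_const 2).mul
    ((measurable_matrix_entry i l).pow_const 2)) 1 fun W hW => ?_
  rw [abs_mul, abs_pow, abs_pow]
  exact mul_le_one₀ (pow_le_one₀ (abs_nonneg _) (abs_entry_le_one_of_orthogonal hW i k))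
    (by positivity) (pow_le_one₀ (abs_nonneg _) (abs_entry_le_one_of_orthogonal hW i l))

lemma integral_reflect_entry (hμ : IsHaarOrthogonal μ) {i k l : Fin d} (hkl : k ≠ l) {β : ℝ}
    {g : ℝ → ℝ} (hg : Measurable g) :
    ∫ W, g (W i k - 2 / (1 + β ^ 2) * (W i k + β * W i l)) ∂μ = ∫ W, g (W i k) ∂μ := by
  let u : Fin d → ℝ := Pi.single k 1 + Pi.single l β
  have huk : u k = 1 := by simp [u, hkl]
  have hul : u l = β := by simp [u, hkl.symm]
  have huu : u ⬝ᵥ u = 1 + β ^ 2 := by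
    change u ⬝ᵥ (Pi.single k 1 + Pi.single l β) = _
    rw [dotProduct_add, dotProduct_single, dotProduct_single, huk, hul]
    ring
  have h := hμ.integral_mul_right (hg.comp (measurable_matrix_entry i k))
    (reflectionMatrix_orthogonal (u := u) (by rw [huu]; positivity))
  refine Eq.trans ?_ h
  congr 1 with W
  have hWu : W i ⬝ᵥ u = W i k + β * W i l := by
    change W i ⬝ᵥ (Pi.single k 1 + Pi.single l β) = _
    rw [dotProduct_add, dotProduct_single, dotProduct_single]
    ring
  simp [mul_reflectionMatrix_apply, huu, huk, hWu]

lemma integral_sq_mul_sq_eq_of_ne (hμ : IsHaarOrthogonal μ) (i : Fin d) {k l : Fin d}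
    (hkl : k ≠ l) :
    ∫ W, W i l ^ 2 * W i l ^ 2 ∂μ = ∫ W, W i k ^ 2 * W i k ^ 2 ∂μ ∧
    3 * ∫ W, W i k ^ 2 * W i l ^ 2 ∂μ = ∫ W, W i k ^ 2 * W i k ^ 2 ∂μ := by
  have hg : Measurable fun x : ℝ => x ^ 2 * x ^ 2 := by fun_prop
  have hswap := hμ.integral_reflect_entry (i := i) hkl (β := -1) hg
  have h1 := hμ.integral_reflect_entry (i := i) hkl (β := 2) hg
  have h2 := hμ.integral_reflect_entry (i := i) hkl (β := -2) hg
  have hs : ∫ W, W i l ^ 2 * W i l ^ 2 ∂μ = ∫ W, W i k ^ 2 * W i k ^ 2 ∂μ := by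
    rw [← hswap]
    congr 1 with W
    ring
  refine ⟨hs, ?_⟩
  have hint : ∀ β : ℝ, Integrable (fun W => (W i k - 2 / (1 + β ^ 2) * (W i k + β * W i l)) ^ 2 *
      (W i k - 2 / (1 + β ^ 2) * (W i k + β * W i l)) ^ 2) μ := fun β => by
    have hk := measurable_matrix_entry i k
    have hl := measurable_matrix_entry i l
    refine hμ.integrable (by fun_prop) ((1 + |2 / (1 + β ^ 2)| * (1 + |β|)) ^ 4) fun W hW => ?_
    rw [← pow_add, abs_pow]
    refine pow_le_pow_left₀ (abs_nonneg _) ((abs_sub _ _).trans ?_) 4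
    have hk1 := abs_entry_le_one_of_orthogonal hW i k
    have hl1 := abs_entry_le_one_of_orthogonal hW i l
    rw [abs_mul]
    gcongr
    refine (abs_add_le _ _).trans ?_
    rw [abs_mul]
    gcongr
    exact mul_le_of_le_one_right (abs_nonneg _) hl1
  have hsum : ∫ W, (162 / 625 * (W i k ^ 2 * W i k ^ 2) + 1728 / 625 * (W i k ^ 2 * W i l ^ 2)
      + 512 / 625 * (W i l ^ 2 * W i l ^ 2)) ∂μ = 2 * ∫ W, W i k ^ 2 * W i k ^ 2 ∂μ := by
    rw [two_mul]
    nth_rewrite 1 [← h1]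
    rw [← h2, ← integral_add (hint 2) (hint (-2))]
    congr 1 with W
    ring
  have i1 := (hμ.integrable_sq_mul_sq i k k).const_mul (162 / 625)
  have i2 := (hμ.integrable_sq_mul_sq i k l).const_mul (1728 / 625)
  have i3 := (hμ.integrable_sq_mul_sq i l l).const_mul (512 / 625)
  have i12 : Integrable (fun W => 162 / 625 * (W i k ^ 2 * W i k ^ 2) +
      1728 / 625 * (W i k ^ 2 * W i l ^ 2)) μ := i1.add i2
  rw [integral_add i12 i3, integral_add i1 i2, integral_const_mul, integral_const_mul,
    integral_const_mul, hs] at hsum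
  linarith

/-- The fourth moments of a row of a Haar distributed orthogonal matrix. -/
lemma integral_sq_mul_sq (hμ : IsHaarOrthogonal μ) (i k l : Fin d) :
    ∫ W, W i k ^ 2 * W i l ^ 2 ∂μ = (1 + if k = l then 2 else 0) / ((d : ℝ) * (d + 2)) := by
  have := hμ.1
  let a : ℝ := ∫ W, W i i ^ 2 * W i i ^ 2 ∂μ
  have hdiag : ∀ k, ∫ W, W i k ^ 2 * W i k ^ 2 ∂μ = a := fun k => by
    rcases eq_or_ne i k with rfl | h
    · rfl
    · exact (hμ.integral_sq_mul_sq_eq_of_ne i h).1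
  have hform : ∀ k l, ∫ W, W i k ^ 2 * W i l ^ 2 ∂μ = a / 3 * (1 + if k = l then 2 else 0) := by
    intro k l
    rcases eq_or_ne k l with rfl | h
    · rw [hdiag, if_pos rfl]
      ring
    · rw [if_neg h, ← hdiag k, ← (hμ.integral_sq_mul_sq_eq_of_ne i h).2]
      ring
  have htot : ∑ k, ∑ l, ∫ W, W i k ^ 2 * W i l ^ 2 ∂μ = 1 := by
    have : ∫ W, (∑ k, ∑ l, W i k ^ 2 * W i l ^ 2) ∂μ = 1 := by
      rw [integral_congr_ae (g := fun _ => (1 : ℝ))]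
      · simp
      · filter_upwards [hμ.2.1] with W hW
        rw [← Finset.sum_mul_sum, sum_row_sq_of_orthogonal hW, one_mul]
    rw [← this, integral_finsetSum _ fun k _ => integrable_finsetSum _ fun l _ =>
      hμ.integrable_sq_mul_sq i k l]
    exact Finset.sum_congr rfl fun k _ =>
      (integral_finsetSum _ fun l _ => hμ.integrable_sq_mul_sq i k l).symm
  have ha : a / 3 * ((d : ℝ) * (d + 2)) = 1 := by
    rw [← htot]
    simp only [hform, ← Finset.mul_sum, Finset.sum_add_distrib, Finset.sum_ite_eq,
      Finset.mem_univ, if_true, Finset.sum_const, Finset.card_univ, Fintype.card_fin,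
      nsmul_eq_mul]
    ring
  have hd : (0 : ℝ) < d := by exact_mod_cast i.pos
  rw [hform, div_mul_eq_mul_div, div_eq_div_iff (by norm_num) (by positivity)]
  linear_combination 3 * (1 + if k = l then (2 : ℝ) else 0) * ha

lemma integrable_sq_sum_mul_sq (hμ : IsHaarOrthogonal μ) (m : Fin d → ℝ) (i : Fin d) :
    Integrable (fun W => (∑ k, m k * W i k ^ 2) ^ 2) μ := by
  simp only [sq (∑ k, m k * _), Finset.sum_mul_sum, mul_mul_mul_comm (m _)]
  exact integrable_finsetSum _ fun k _ => integrable_finsetSum _ fun l _ =>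
      (hμ.integrable_sq_mul_sq i k l).const_mul _

lemma integral_sq_sum_mul_sq (hμ : IsHaarOrthogonal μ) {m : Fin d → ℝ} (hm : ∑ k, m k = 0)
    (i : Fin d) :
    ∫ W, (∑ k, m k * W i k ^ 2) ^ 2 ∂μ = 2 * (∑ k, m k ^ 2) / ((d : ℝ) * (d + 2)) := by
  simp only [sq (∑ k, m k * _), Finset.sum_mul_sum, mul_mul_mul_comm (m _)]
  rw [integral_finsetSum _ fun k _ => integrable_finsetSum _ fun l _ =>
      (hμ.integrable_sq_mul_sq i k l).const_mul _]
  have : ∀ k, ∫ W, ∑ l, m k * m l * (W i k ^ 2 * W i l ^ 2) ∂μ =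
      2 * m k ^ 2 / ((d : ℝ) * (d + 2)) := fun k => by
    rw [integral_finsetSum _ fun l _ => (hμ.integrable_sq_mul_sq i k l).const_mul _]
    simp only [integral_const_mul, hμ.integral_sq_mul_sq, mul_div_assoc', mul_add, mul_one,
      ← Finset.sum_div, Finset.sum_add_distrib, ← Finset.mul_sum, hm]
    simp
    ring
  simp only [this, ← Finset.sum_div, Finset.mul_sum]

end IsHaarOrthogonal

end Moments

section Spectral

variable {d : ℕ} {X : Matrix (Fin d) (Fin d) ℝ}

lemma exists_orthogonal_row_sq_eq (hsym : (X * Xᵀ).IsHermitian) :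
    ∃ U : Matrix (Fin d) (Fin d) ℝ, Uᵀ * U = 1 ∧ ∀ W : Matrix (Fin d) (Fin d) ℝ, ∀ i,
      ∑ j, (W * X) i j ^ 2 = ∑ k, hsym.eigenvalues k * (W * U) i k ^ 2 := by
  let U : Matrix (Fin d) (Fin d) ℝ := hsym.eigenvectorUnitary
  refine ⟨U, ?_, fun W i => ?_⟩
  · simpa [Matrix.star_eq_conjTranspose] using
      Unitary.coe_star_mul_self hsym.eigenvectorUnitary
  have hspec : X * Xᵀ = U * Matrix.diagonal hsym.eigenvalues * Uᵀ := by
    have h := hsym.spectral_theorem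
    rw [Unitary.conjStarAlgAut_apply] at h
    simpa [Matrix.star_eq_conjTranspose] using h
  have hleft : ∑ j, (W * X) i j ^ 2 = ((W * X) * (W * X)ᵀ) i i := by
    simp only [Matrix.mul_apply (N := (W * X)ᵀ), Matrix.transpose_apply, sq]
  have hmat : (W * X) * (W * X)ᵀ = (W * U * Matrix.diagonal hsym.eigenvalues) * (W * U)ᵀ := by
    calc (W * X) * (W * X)ᵀ = W * (X * Xᵀ) * Wᵀ := by
          simp only [Matrix.transpose_mul, Matrix.mul_assoc]
      _ = W * (U * Matrix.diagonal hsym.eigenvalues * Uᵀ) * Wᵀ :=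
          congrArg (fun A => W * A * Wᵀ) hspec
      _ = _ := by simp only [Matrix.transpose_mul, Matrix.mul_assoc]
  rw [hleft, hmat, Matrix.mul_apply]
  refine Finset.sum_congr rfl fun k _ => ?_
  rw [Matrix.mul_diagonal, Matrix.transpose_apply]
  ring

lemma sum_eigenvalues_of_unit_rows (hrows : ∀ i, ∑ j, X i j ^ 2 = 1)
    (hsym : (X * Xᵀ).IsHermitian) : ∑ k, hsym.eigenvalues k = d := by
  have h := hsym.trace_eq_sum_eigenvalues
  simp only [RCLike.ofReal_real_eq_id, id] at h
  rw [← h]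
  simp [Matrix.trace, Matrix.mul_apply, ← sq, hrows]

lemma sum_eigenvalues_sub_one_sq_le (hrows : ∀ i, ∑ j, X i j ^ 2 = 1)
    (hsym : (X * Xᵀ).IsHermitian) : ∑ k, (hsym.eigenvalues k - 1) ^ 2 ≤ (d : ℝ) ^ 2 := by
  have hpsd : (X * Xᵀ).PosSemidef := by
    simpa using Matrix.posSemidef_self_mul_conjTranspose X
  have hsum := sum_eigenvalues_of_unit_rows hrows hsym
  have hsq := Finset.sum_sq_le_sq_sum_of_nonneg (s := Finset.univ) (f := hsym.eigenvalues)
    fun k _ => hpsd.eigenvalues_nonneg k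
  have : ∑ k, (hsym.eigenvalues k - 1) ^ 2 = ∑ k, hsym.eigenvalues k ^ 2 - d := by
    simp only [sub_sq, Finset.sum_add_distrib, Finset.sum_sub_distrib, mul_one, ← Finset.mul_sum,
      hsum]
    simp
    ring
  rw [this, ← hsum]
  linarith [hsum ▸ (Nat.cast_nonneg d : (0 : ℝ) ≤ d)]

lemma eigenvalues_eq_one_of_orthogonal (hX : Xᵀ * X = 1) (hsym : (X * Xᵀ).IsHermitian)
    (k : Fin d) : hsym.eigenvalues k = 1 := by
  have : Nonempty (Fin d) := ⟨k⟩
  have h := hsym.eigenvalues_mem_spectrum_real k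
  have hX' : X * Xᵀ = 1 := mul_eq_one_comm.1 hX
  have hs : spectrum ℝ (X * Xᵀ) = {1} := by rw [hX', spectrum.one_eq]
  rw [hs] at h
  exact h

end Spectral

section LowerBound

variable {d : ℕ} {X : Matrix (Fin d) (Fin d) ℝ}

lemma det_ne_zero_of_orthogonal {W : Matrix (Fin d) (Fin d) ℝ} (hW : Wᵀ * W = 1) :
    W.det ≠ 0 := fun h => by
  simpa [h] using congrArg Matrix.det hW

lemma det_mul_sq_of_orthogonal {W : Matrix (Fin d) (Fin d) ℝ} (hW : Wᵀ * W = 1) :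
    (W * X).det ^ 2 = X.det ^ 2 := by
  have h : W.det * W.det = 1 := by simpa using congrArg Matrix.det hW
  rw [Matrix.det_mul, mul_pow, sq W.det, h, one_mul]

/-- The quadratic lower bound for the isometry ratio before averaging over `W`. -/
lemma le_isoI_BN_mul (hd : 1 ≤ d) (hX : X.det ≠ 0) (hrows : ∀ i, ∑ j, X i j ^ 2 = 1)
    {W : Matrix (Fin d) (Fin d) ℝ} (hW : Wᵀ * W = 1) {lam : Fin d → ℝ}
    (hlam : ∑ k, lam k = d) {U : Matrix (Fin d) (Fin d) ℝ} (hU : Uᵀ * U = 1)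
    (hrow : ∀ i, ∑ j, (W * X) i j ^ 2 = ∑ k, lam k * (W * U) i k ^ 2) :
    (1 + (∑ i, (∑ k, (lam k - 1) * (W * U) i k ^ 2) ^ 2) / (2 * (d : ℝ) ^ 2)) * isoI X ≤
      isoI (BN (W * X)) := by
  have hWX : (W * X).det ≠ 0 := by
    rw [Matrix.det_mul]
    exact mul_ne_zero (det_ne_zero_of_orthogonal hW) hX
  have hWU : (W * U)ᵀ * (W * U) = 1 := by
    rw [Matrix.transpose_mul, Matrix.mul_assoc, ← Matrix.mul_assoc Wᵀ, hW, Matrix.one_mul, hU]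
  have hsum : ∑ i, ∑ j, (W * X) i j ^ 2 = d := by
    simp only [hrow]
    rw [Finset.sum_comm]
    simp only [← Finset.mul_sum, sum_col_sq_of_orthogonal hWU, mul_one, hlam]
  have hdev : ∀ i, ∑ k, (lam k - 1) * (W * U) i k ^ 2 = ∑ j, (W * X) i j ^ 2 - 1 := fun i => by
    simp only [sub_mul, one_mul, Finset.sum_sub_distrib, sum_row_sq_of_orthogonal hWU, hrow]
  rw [isoI_BN hd hWX, isoI_eq_of_unit_rows hd hX hrows, det_mul_sq_of_orthogonal hW]
  simp only [hdev]
  exact mul_le_mul_of_nonneg_right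
    (one_add_sum_sq_le_prod_inv_rpow hd (sum_row_sq_pos hWX) hsum) (by positivity)

end LowerBound

/-- for nonsingular `X` with unit-norm rows, eigenvalues `λ` of `XXᵀ`,
and `W` Haar-distributed on `O(d)`,
`E[I(BN(WX))] ≥ (1 − Σ_k (λ_k − 1)²/(2d²(d+2)))⁻¹ · I(X)`, with equality when `X`
is orthogonal. -/
theorem expected_isoI_BN_haar_ge {d : ℕ} (hd : 2 ≤ d)
    (X : Matrix (Fin d) (Fin d) ℝ) (hX : X.det ≠ 0)
    (hrows : ∀ i, ∑ j, X i j ^ 2 = 1)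
    (hsym : (X * Xᵀ).IsHermitian)
    (μ : Measure (Matrix (Fin d) (Fin d) ℝ)) (hμ : IsHaarOrthogonal μ) :
    (∫ W, isoI (BN (W * X)) ∂μ) ≥
        (1 - (∑ k, (hsym.eigenvalues k - 1) ^ 2) / (2 * (d : ℝ) ^ 2 * (d + 2)))⁻¹
          * isoI X ∧
      (Xᵀ * X = 1 →
        (∫ W, isoI (BN (W * X)) ∂μ) =
          (1 - (∑ k, (hsym.eigenvalues k - 1) ^ 2) / (2 * (d : ℝ) ^ 2 * (d + 2)))⁻¹
            * isoI X) := by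
  have hd1 : 1 ≤ d := by lia
  have hd0 : (0 : ℝ) < d := by exact_mod_cast hd1
  have := hμ.1
  have hiso : ∀ W, Wᵀ * W = 1 → (W * X).det ≠ 0 := fun W hW => by
    rw [Matrix.det_mul]
    exact mul_ne_zero (det_ne_zero_of_orthogonal hW) hX
  refine ⟨?_, fun hXo => ?_⟩
  · obtain ⟨U, hU, hrow⟩ := exists_orthogonal_row_sq_eq hsym
    have hlam := sum_eigenvalues_of_unit_rows hrows hsym
    have hV := sum_eigenvalues_sub_one_sq_le hrows hsym
    set lam := hsym.eigenvalues
    set V := ∑ k, (lam k - 1) ^ 2 with hVdef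
    have hV0 : 0 ≤ V := Finset.sum_nonneg fun _ _ => sq_nonneg _
    let F : Matrix (Fin d) (Fin d) ℝ → ℝ := fun W =>
      (1 + (∑ i, (∑ k, (lam k - 1) * W i k ^ 2) ^ 2) / (2 * (d : ℝ) ^ 2)) * isoI X
    have hFm : Measurable F := by
      have he := measurable_matrix_entry (d := d)
      fun_prop
    have hm : ∑ k, (lam k - 1) = 0 := by simp [hlam]
    have hsumint := integrable_finsetSum Finset.univ fun i _ =>
      hμ.integrable_sq_sum_mul_sq (fun k => lam k - 1) i
    have hFint : ∫ W, F W ∂μ = (1 + V / ((d : ℝ) ^ 2 * (d + 2))) * isoI X := by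
      simp only [F]
      rw [integral_mul_const, integral_add (integrable_const _) (hsumint.div_const _),
        integral_div, integral_finsetSum _ fun i _ =>
          hμ.integrable_sq_sum_mul_sq (fun k => lam k - 1) i]
      simp only [hμ.integral_sq_sum_mul_sq hm, ← hVdef]
      simp only [integral_const, probReal_univ, one_smul, Finset.sum_const, Finset.card_univ,
        Fintype.card_fin, nsmul_eq_mul]
      congr 2
      field_simp
    have hFle : ∫ W, F W ∂μ ≤ ∫ W, isoI (BN (W * X)) ∂μ := by
      rw [← hμ.integral_mul_right hFm hU]
      refine integral_mono_of_nonneg (Filter.Eventually.of_forall fun W => ?_)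
        (hμ.integrable (measurable_isoI_BN_mul X) 1 fun W hW => ?_) ?_
      · exact mul_nonneg (by positivity) (isoI_pos _).le
      · rw [abs_of_nonneg (isoI_pos _).le]
        exact isoI_le_one_of_unit_rows hd1 (det_BN_ne_zero (hiso W hW)) (BN_unit_rows (hiso W hW))
      · filter_upwards [hμ.2.1] with W hW
        exact le_isoI_BN_mul hd1 hX hrows hW hlam hU (hrow W)
    refine ge_iff_le.2 (le_trans ?_ (hFint ▸ hFle))
    refine mul_le_mul_of_nonneg_right ?_ (isoI_pos _).le
    set q := V / ((d : ℝ) ^ 2 * (d + 2)) with hq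
    have hq0 : 0 ≤ q := by positivity
    have hq1 : q ≤ 1 := by
      rw [hq, div_le_one (by positivity)]
      nlinarith [sq_nonneg (d : ℝ)]
    have hq2 : V / (2 * (d : ℝ) ^ 2 * (d + 2)) = q / 2 := by rw [hq]; field_simp
    rw [hq2, inv_le_iff_one_le_mul₀ (by linarith)]
    nlinarith
  · simp only [eigenvalues_eq_one_of_orthogonal hXo]
    have hone : ∀ Y : Matrix (Fin d) (Fin d) ℝ, Yᵀ * Y = 1 → isoI Y = 1 := fun Y hY => by
      rw [isoI, isoGap, hY]
      simp [hd0.ne']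
    have hBN : ∀ W, Wᵀ * W = 1 → isoI (BN (W * X)) = 1 := fun W hW => by
      have hWX : (W * X)ᵀ * (W * X) = 1 := by
        rw [Matrix.transpose_mul, Matrix.mul_assoc, ← Matrix.mul_assoc Wᵀ, hW, Matrix.one_mul, hXo]
      have hfix : BN (W * X) = W * X := by
        ext i j
        simp [BN, rowNorm, sum_row_sq_of_orthogonal hWX]
      rw [hfix, hone _ hWX]
    rw [integral_congr_ae (g := fun _ => (1 : ℝ)) (hμ.2.1.mono hBN), hone X hXo]
    simp
end

section
/- Let d ≥ 2, let X ∈ ℝ^{d×d} be nonsingular with all rows of unit Euclidean norm, let λ_1, …, λ_d be the eigenvalues of XXᵀ, and let W be Haar-distributed on the orthogonal group O(d). Set X' = WX. Then for all i ≠ j, E[ ‖X'_{i·}‖ · ‖X'_{j·}‖ ] ≤ 1 − Σ_{k=1}^d (λ_k − 1)² / (2d(d+2)(d−1)). -/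
open MeasureTheory Matrix

theorem sum_sq_eigenvalues_eq_trace {n : Type*} [Fintype n] [DecidableEq n] {A : Matrix n n ℝ}
    (hA : A.IsHermitian) : ∑ k, hA.eigenvalues k ^ 2 = (A * A).trace := by
  conv_rhs => rw [hA.spectral_theorem, ← map_mul, Unitary.conjStarAlgAut_apply,
    Matrix.trace_mul_cycle]
  simp [Matrix.diagonal_mul_diagonal, Matrix.trace_diagonal, sq]

theorem sum_sq_eq_trace_mul_transpose {m n : Type*} [Fintype m] [Fintype n] (A : Matrix m n ℝ) :
    ∑ i, ∑ j, A i j ^ 2 = (A * Aᵀ).trace := by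
  simp [Matrix.trace, Matrix.mul_apply, sq]

theorem sum_diag_conj_eq_trace {n : Type*} [Fintype n] [DecidableEq n] (A : Matrix n n ℝ)
    {W : Matrix n n ℝ} (hW : Wᵀ * W = 1) : ∑ k, (W * A * Wᵀ) k k = A.trace := by
  change (W * A * Wᵀ).trace = _
  rw [Matrix.trace_mul_cycle, hW, Matrix.one_mul]

theorem isCompact_setOf_transpose_mul_self_eq_one (d : ℕ) :
    IsCompact {W : Matrix (Fin d) (Fin d) ℝ | Wᵀ * W = 1} := by
  have hsub : {W : Matrix (Fin d) (Fin d) ℝ | Wᵀ * W = 1} ⊆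
      (Set.univ.pi fun _ => Set.univ.pi fun _ => Set.Icc (-1 : ℝ) 1) := by
    intro W hW i _ j _
    have h : ∑ k, W k j ^ 2 = 1 := by
      simpa [Matrix.mul_apply, sq] using congrFun (congrFun hW j) j
    have h' : W i j ^ 2 ≤ 1 :=
      h ▸ Finset.single_le_sum (f := fun k => W k j ^ 2) (fun k _ => sq_nonneg _)
        (Finset.mem_univ i)
    exact abs_le.mp ((sq_le_one_iff_abs_le_one _).mp h')
  refine IsCompact.of_isClosed_subset
    (isCompact_univ_pi fun _ => isCompact_univ_pi fun _ => isCompact_Icc) ?_ hsub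
  exact isClosed_eq (by fun_prop) continuous_const

namespace IsHaarOrthogonal

variable {d : ℕ} {μ : Measure (Matrix (Fin d) (Fin d) ℝ)}

theorem aestronglyMeasurable_of_continuous {f : Matrix (Fin d) (Fin d) ℝ → ℝ}
    (hf : Continuous f) : AEStronglyMeasurable f μ := by
  have : Measurable f := Continuous.measurable (α := Fin d → Fin d → ℝ) hf
  exact this.aestronglyMeasurable

theorem integrable_of_continuous (hμ : IsHaarOrthogonal μ) {f : Matrix (Fin d) (Fin d) ℝ → ℝ}
    (hf : Continuous f) : Integrable f μ := by
  have := hμ.1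
  obtain ⟨C, hC⟩ := (isCompact_setOf_transpose_mul_self_eq_one d).exists_bound_of_continuousOn
    hf.continuousOn
  exact Integrable.of_bound (aestronglyMeasurable_of_continuous hf) C
    (hμ.2.1.mono fun W hW => hC W hW)

theorem integral_sum_sum (hμ : IsHaarOrthogonal μ) {ι κ : Type*} [Fintype ι] [Fintype κ]
    {f : ι → κ → Matrix (Fin d) (Fin d) ℝ → ℝ} (hf : ∀ k l, Continuous (f k l)) :
    ∫ W, ∑ k, ∑ l, f k l W ∂μ = ∑ k, ∑ l, ∫ W, f k l W ∂μ := by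
  rw [integral_finsetSum _ fun k _ => hμ.integrable_of_continuous (by fun_prop)]
  exact Finset.sum_congr rfl fun k _ =>
    integral_finsetSum _ fun l _ => hμ.integrable_of_continuous (hf k l)

theorem integral_mul_left (hμ : IsHaarOrthogonal μ) {f : Matrix (Fin d) (Fin d) ℝ → ℝ}
    (hf : Continuous f) {U : Matrix (Fin d) (Fin d) ℝ} (hU : Uᵀ * U = 1) :
    ∫ W, f (U * W) ∂μ = ∫ W, f W ∂μ := by
  have hm : Measurable fun W : Matrix (Fin d) (Fin d) ℝ => U * W := by
    have hc : Continuous fun W : Matrix (Fin d) (Fin d) ℝ => U * W := by fun_prop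
    exact Continuous.measurable (α := Fin d → Fin d → ℝ) (γ := Fin d → Fin d → ℝ) hc
  conv_rhs => rw [← (hμ.2.2 U hU).1]
  exact (integral_map hm.aemeasurable (aestronglyMeasurable_of_continuous hf)).symm

theorem integral_submatrix (hμ : IsHaarOrthogonal μ) {f : Matrix (Fin d) (Fin d) ℝ → ℝ}
    (hf : Continuous f) (σ : Equiv.Perm (Fin d)) :
    ∫ W, f (W.submatrix σ id) ∂μ = ∫ W, f W ∂μ := by
  have hU : ((1 : Matrix (Fin d) (Fin d) ℝ).submatrix σ id)ᵀ *
      (1 : Matrix (Fin d) (Fin d) ℝ).submatrix σ id = 1 := by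
    rw [Matrix.transpose_submatrix, Matrix.submatrix_mul_equiv]
    simp
  rw [← hμ.integral_mul_left hf hU]
  congr! 3 with W
  ext i j
  simp [Matrix.mul_apply, Matrix.one_apply]

end IsHaarOrthogonal

/-- The orthogonal matrix acting on the plane of coordinates `i`, `j` by
`(x, y) ↦ ((x + y) / √2, (x - y) / √2)`. -/
noncomputable def planeHadamard {d : ℕ} (i j : Fin d) : Matrix (Fin d) (Fin d) ℝ :=
  Matrix.of fun k => if k = i then (√2)⁻¹ • (Pi.single i 1 + Pi.single j 1)
    else if k = j then (√2)⁻¹ • (Pi.single i 1 - Pi.single j 1) else Pi.single k 1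

theorem planeHadamard_left {d : ℕ} (i j : Fin d) :
    planeHadamard i j i = (√2)⁻¹ • (Pi.single i 1 + Pi.single j 1) :=
  if_pos rfl

theorem planeHadamard_right {d : ℕ} {i j : Fin d} (hij : i ≠ j) :
    planeHadamard i j j = (√2)⁻¹ • (Pi.single i 1 - Pi.single j 1) :=
  (if_neg hij.symm).trans (if_pos rfl)

theorem planeHadamard_of_ne {d : ℕ} {i j k : Fin d} (hi : k ≠ i) (hj : k ≠ j) :
    planeHadamard i j k = Pi.single k 1 :=
  (if_neg hi).trans (if_neg hj)

theorem inv_sqrt_two_mul_self : (√2)⁻¹ * (√2)⁻¹ = (1 / 2 : ℝ) := by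
  rw [← mul_inv, Real.mul_self_sqrt (by norm_num), one_div]

theorem planeHadamard_transpose_mul_self {d : ℕ} {i j : Fin d} (hij : i ≠ j) :
    (planeHadamard i j)ᵀ * planeHadamard i j = 1 := by
  have hs := inv_sqrt_two_mul_self
  rw [mul_eq_one_comm]
  ext k l
  change planeHadamard i j k ⬝ᵥ planeHadamard i j l = _
  rcases eq_or_ne k i with rfl | hki
  · rcases eq_or_ne l k with rfl | hlk
    · simp [planeHadamard_left, hij, hij.symm]
      grind
    rcases eq_or_ne l j with rfl | hlj
    · simp [planeHadamard_left, planeHadamard_right, hij, hij.symm]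
    · simp [planeHadamard_left, planeHadamard_of_ne, hlk, hlj, hlk.symm]
  rcases eq_or_ne k j with rfl | hkj
  · rcases eq_or_ne l i with rfl | hli
    · simp [planeHadamard_left, planeHadamard_right, hij, hij.symm]
    rcases eq_or_ne l k with rfl | hlk
    · simp [planeHadamard_right, hij, hij.symm]
      grind
    · simp [planeHadamard_right hij, planeHadamard_of_ne, hli, hlk, hlk.symm]
  rw [planeHadamard_of_ne hki hkj]
  rcases eq_or_ne l i with rfl | hli
  · simp [planeHadamard_left, hki, hkj]
  rcases eq_or_ne l j with rfl | hlj
  · simp [planeHadamard_right hij, hki, hkj]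
  · simp [planeHadamard_of_ne hli hlj, Matrix.one_apply, Pi.single_apply, eq_comm]

theorem mul_mul_transpose_apply {d : ℕ} (W A : Matrix (Fin d) (Fin d) ℝ) (i j : Fin d) :
    (W * A * Wᵀ) i j = W i ⬝ᵥ A *ᵥ W j := by
  rw [Matrix.dotProduct_mulVec]
  rfl

theorem submatrix_mul_mul_transpose_apply {d : ℕ} (W A : Matrix (Fin d) (Fin d) ℝ)
    (σ : Fin d → Fin d) (i j : Fin d) :
    (W.submatrix σ id * A * (W.submatrix σ id)ᵀ) i j = (W * A * Wᵀ) (σ i) (σ j) := by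
  simp only [mul_mul_transpose_apply]
  rfl

theorem planeHadamard_conj_apply {d : ℕ} {i j : Fin d} (hij : i ≠ j)
    {N : Matrix (Fin d) (Fin d) ℝ} (hN : N.IsSymm) :
    (planeHadamard i j * N * (planeHadamard i j)ᵀ) i j = (N i i - N j j) / 2 := by
  have hs := inv_sqrt_two_mul_self
  have h := hN.apply i j
  rw [mul_mul_transpose_apply, planeHadamard_left, planeHadamard_right hij]
  simp only [smul_dotProduct, add_dotProduct, Matrix.mulVec_smul, Matrix.mulVec_sub,
    dotProduct_smul, dotProduct_sub, Matrix.mulVec_single_one, single_one_dotProduct,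
    Matrix.col_apply, smul_eq_mul]
  grind

theorem sqrt_mul_sqrt_le {a b D : ℝ} (ha : 0 ≤ a) (hb : 0 ≤ b) (hD : 0 < D) (hab : a + b ≤ D) :
    √a * √b ≤ (a + b) / 2 - (a - b) ^ 2 / (4 * D) := by
  obtain ⟨x, hx, rfl⟩ : ∃ x, 0 ≤ x ∧ x ^ 2 = a := ⟨√a, Real.sqrt_nonneg a, Real.sq_sqrt ha⟩
  obtain ⟨y, hy, rfl⟩ : ∃ y, 0 ≤ y ∧ y ^ 2 = b := ⟨√b, Real.sqrt_nonneg b, Real.sq_sqrt hb⟩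
  rw [Real.sqrt_sq hx, Real.sqrt_sq hy]
  have h : (x ^ 2 - y ^ 2) ^ 2 / (4 * D) ≤ (x - y) ^ 2 / 2 := by
    rw [div_le_div_iff₀ (by positivity) (by norm_num)]
    nlinarith [mul_nonneg (sq_nonneg (x - y)) (sub_nonneg.2 hab),
      mul_nonneg (sq_nonneg (x - y)) (sq_nonneg (x - y))]
  linarith

namespace IsHaarOrthogonal

variable {d : ℕ} {μ : Measure (Matrix (Fin d) (Fin d) ℝ)}

theorem integral_conj_diag (hμ : IsHaarOrthogonal μ) (A : Matrix (Fin d) (Fin d) ℝ) (i : Fin d) :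
    d * ∫ W, (W * A * Wᵀ) i i ∂μ = A.trace := by
  have := hμ.1
  have hperm (k : Fin d) : ∫ W, (W * A * Wᵀ) k k ∂μ = ∫ W, (W * A * Wᵀ) i i ∂μ := by
    rw [← hμ.integral_submatrix (f := fun W => (W * A * Wᵀ) i i) (by fun_prop) (Equiv.swap i k)]
    simp only [submatrix_mul_mul_transpose_apply, Equiv.swap_apply_left]
  have hsum : ∫ W, ∑ k, (W * A * Wᵀ) k k ∂μ = A.trace := by
    rw [integral_congr_ae (hμ.2.1.mono fun W hW => sum_diag_conj_eq_trace A hW)]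
    simp
  rw [integral_finsetSum _ fun k _ => hμ.integrable_of_continuous (by fun_prop)] at hsum
  simpa [hperm] using hsum

theorem integral_conj_sub_sq (hμ : IsHaarOrthogonal μ) {A : Matrix (Fin d) (Fin d) ℝ}
    (hA : A.IsSymm) {i j : Fin d} (hij : i ≠ j) :
    ∫ W, ((W * A * Wᵀ) i i - (W * A * Wᵀ) j j) ^ 2 ∂μ = 4 * ∫ W, (W * A * Wᵀ) i j ^ 2 ∂μ := by
  rw [← hμ.integral_mul_left (f := fun W => (W * A * Wᵀ) i j ^ 2) (by fun_prop)
    (planeHadamard_transpose_mul_self hij), ← integral_const_mul]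
  refine integral_congr_ae (.of_forall fun W => ?_)
  have hN : (W * A * Wᵀ).IsSymm := by
    simp [Matrix.IsSymm, Matrix.transpose_mul, hA.eq, Matrix.mul_assoc]
  have h := planeHadamard_conj_apply hij hN
  simp only [Matrix.transpose_mul, ← Matrix.mul_assoc] at h ⊢
  rw [h]
  ring

theorem integral_conj_offDiag_sq (hμ : IsHaarOrthogonal μ) (A : Matrix (Fin d) (Fin d) ℝ)
    {i j k l : Fin d} (hij : i ≠ j) (hkl : k ≠ l) :
    ∫ W, (W * A * Wᵀ) k l ^ 2 ∂μ = ∫ W, (W * A * Wᵀ) i j ^ 2 ∂μ := by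
  obtain ⟨σ, hi, hj⟩ : ∃ σ : Equiv.Perm (Fin d), σ i = k ∧ σ j = l := by
    refine ⟨(Equiv.swap i k).trans (Equiv.swap (Equiv.swap i k j) l), ?_, by simp⟩
    simp only [Equiv.trans_apply, Equiv.swap_apply_left]
    exact Equiv.swap_apply_of_ne_of_ne
      (fun h => hij ((Equiv.swap i k).injective ((Equiv.swap_apply_left i k).trans h))) hkl
  rw [← hμ.integral_submatrix (f := fun W => (W * A * Wᵀ) i j ^ 2) (by fun_prop) σ]
  simp only [submatrix_mul_mul_transpose_apply, hi, hj]

/-- The second moment of an off-diagonal entry of a randomly rotated symmetric matrix. -/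
theorem integral_conj_offDiag_sq_eq (hμ : IsHaarOrthogonal μ) {A : Matrix (Fin d) (Fin d) ℝ}
    (hA : A.IsSymm) {i j : Fin d} (hij : i ≠ j) :
    d * (d - 1) * (d + 2) * ∫ W, (W * A * Wᵀ) i j ^ 2 ∂μ =
      d * (A * A).trace - A.trace ^ 2 := by
  have := hμ.1
  set c := ∫ W, (W * A * Wᵀ) i j ^ 2 ∂μ with hc
  set Q := ∑ k, ∫ W, (W * A * Wᵀ) k k ^ 2 ∂μ with hQ
  have hcard (k : Fin d) : ((Finset.univ.erase k).card : ℝ) = d - 1 := by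
    rw [Finset.card_erase_of_mem (Finset.mem_univ k), Finset.card_univ, Fintype.card_fin,
      Nat.cast_pred k.pos]
  have htrace : ∀ᵐ W ∂μ, ∑ k, (W * A * Wᵀ) k k = A.trace :=
    hμ.2.1.mono fun W hW => sum_diag_conj_eq_trace A hW
  have hoff : ∑ k, ∑ l ∈ Finset.univ.erase k, ∫ W, (W * A * Wᵀ) k l ^ 2 ∂μ = d * (d - 1) * c := by
    rw [Finset.sum_congr rfl fun k _ => Finset.sum_congr rfl fun l hl =>
      hμ.integral_conj_offDiag_sq A hij (Finset.ne_of_mem_erase hl).symm]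
    simp only [Finset.sum_const, nsmul_eq_mul, hcard, Finset.card_univ, Fintype.card_fin, ← hc]
    ring
  have hfrob : Q + d * (d - 1) * c = (A * A).trace := by
    rw [← hoff, hQ, ← Finset.sum_add_distrib, Finset.sum_congr rfl fun k _ => Finset.add_sum_erase _
        (fun l => ∫ W, (W * A * Wᵀ) k l ^ 2 ∂μ) (Finset.mem_univ k),
      ← hμ.integral_sum_sum (f := fun k l W => (W * A * Wᵀ) k l ^ 2) fun k l => by fun_prop,
      integral_congr_ae (hμ.2.1.mono fun W hW => show _ = (A * A).trace from ?_)]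
    · simp
    · have hT : (W * A * Wᵀ)ᵀ = W * A * Wᵀ := by
        simp [Matrix.transpose_mul, hA.eq, Matrix.mul_assoc]
      have hprod : W * A * Wᵀ * (W * A * Wᵀ) = W * (A * A) * Wᵀ := by
        calc W * A * Wᵀ * (W * A * Wᵀ) = W * A * (Wᵀ * W) * A * Wᵀ := by
              simp only [Matrix.mul_assoc]
          _ = W * (A * A) * Wᵀ := by rw [hW]; simp only [Matrix.mul_assoc, Matrix.one_mul]
      rw [sum_sq_eq_trace_mul_transpose, hT, hprod]
      exact sum_diag_conj_eq_trace _ hW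
  have hdiff : d * (d - 1) * (4 * c) = 2 * d * Q - 2 * A.trace ^ 2 := by
    have hsub : ∑ k, ∑ l, ∫ W, ((W * A * Wᵀ) k k - (W * A * Wᵀ) l l) ^ 2 ∂μ =
        d * (d - 1) * (4 * c) := by
      have (k : Fin d) : ∑ l, ∫ W, ((W * A * Wᵀ) k k - (W * A * Wᵀ) l l) ^ 2 ∂μ =
          (d - 1) * (4 * c) := by
        rw [← Finset.add_sum_erase _ _ (Finset.mem_univ k), Finset.sum_congr rfl fun l hl => by
          rw [hμ.integral_conj_sub_sq hA (Finset.ne_of_mem_erase hl).symm,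
            hμ.integral_conj_offDiag_sq A hij (Finset.ne_of_mem_erase hl).symm]]
        simp only [sub_self, Finset.sum_const, nsmul_eq_mul, hcard, ← hc]
        simp
      simp only [this, Finset.sum_const, nsmul_eq_mul, Finset.card_univ, Fintype.card_fin]
      ring
    rw [← hsub, ← hμ.integral_sum_sum
        (f := fun k l W => ((W * A * Wᵀ) k k - (W * A * Wᵀ) l l) ^ 2) fun k l => by fun_prop, hQ,
      ← integral_finsetSum _ fun k _ => hμ.integrable_of_continuous (by fun_prop),
      ← integral_const_mul,
      integral_congr_ae (g := fun W => 2 * d * ∑ k, (W * A * Wᵀ) k k ^ 2 - 2 * A.trace ^ 2)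
        (htrace.mono fun W hW => ?_)]
    · rw [integral_sub (hμ.integrable_of_continuous (by fun_prop)) (integrable_const _)]
      simp
    · simp only [sub_sq, Finset.sum_add_distrib, Finset.sum_sub_distrib, ← Finset.mul_sum,
        ← Finset.sum_mul, hW, Finset.sum_const, Finset.card_univ, Fintype.card_fin, nsmul_eq_mul]
      ring
  linear_combination d * hfrob + hdiff / 2

end IsHaarOrthogonal

/-- for nonsingular `X` with unit-norm rows, eigenvalues `λ` of `XXᵀ`,
`W` Haar on `O(d)` and `X' = WX`, for all `i ≠ j`,
`E[‖X'_{i·}‖·‖X'_{j·}‖] ≤ 1 − Σ_k (λ_k − 1)²/(2d(d+2)(d−1))`. -/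
theorem expected_rowNorm_prod_le {d : ℕ} (hd : 2 ≤ d)
    (X : Matrix (Fin d) (Fin d) ℝ) (hX : X.det ≠ 0)
    (hrows : ∀ i, ∑ j, X i j ^ 2 = 1)
    (hsym : (X * Xᵀ).IsHermitian)
    (μ : Measure (Matrix (Fin d) (Fin d) ℝ)) (hμ : IsHaarOrthogonal μ) :
    ∀ i j : Fin d, i ≠ j →
      (∫ W, rowNorm (W * X) i * rowNorm (W * X) j ∂μ) ≤
        1 - (∑ k, (hsym.eigenvalues k - 1) ^ 2) /
              (2 * (d : ℝ) * ((d : ℝ) + 2) * ((d : ℝ) - 1)) := by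
  intro i j hij
  have := hμ.1
  have hd' : (2 : ℝ) ≤ d := by exact_mod_cast hd
  have hA : (X * Xᵀ).IsSymm := by simp [Matrix.IsSymm, Matrix.transpose_mul]
  have htr : (X * Xᵀ).trace = d := by
    rw [← sum_sq_eq_trace_mul_transpose]
    simp [hrows]
  have heig : ∑ k, (hsym.eigenvalues k - 1) ^ 2 = (X * Xᵀ * (X * Xᵀ)).trace - d := by
    have h := hsym.trace_eq_sum_eigenvalues
    simp only [RCLike.ofReal_real_eq_id, id, htr] at h
    simp only [sub_sq, Finset.sum_add_distrib, Finset.sum_sub_distrib, ← Finset.mul_sum,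
      ← Finset.sum_mul, sum_sq_eigenvalues_eq_trace, ← h]
    simp
    ring
  have hdiag (W : Matrix (Fin d) (Fin d) ℝ) (k : Fin d) :
      ∑ l, (W * X) k l ^ 2 = (W * (X * Xᵀ) * Wᵀ) k k := by
    rw [← Matrix.mul_assoc, Matrix.mul_assoc (W * X), ← Matrix.transpose_mul]
    simp only [Matrix.mul_apply (M := W * X) (N := (W * X)ᵀ), Matrix.transpose_apply, sq]
  have hnonneg (W : Matrix (Fin d) (Fin d) ℝ) (k : Fin d) : 0 ≤ (W * (X * Xᵀ) * Wᵀ) k k :=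
    hdiag W k ▸ Finset.sum_nonneg fun l _ => sq_nonneg _
  have hmean (k : Fin d) : ∫ W, (W * (X * Xᵀ) * Wᵀ) k k ∂μ = 1 := by
    have h := hμ.integral_conj_diag (X * Xᵀ) k
    rw [htr] at h
    exact mul_left_cancel₀ (by positivity) (h.trans (mul_one _).symm)
  have hbound : ∀ᵐ W ∂μ, rowNorm (W * X) i * rowNorm (W * X) j ≤
      ((W * (X * Xᵀ) * Wᵀ) i i + (W * (X * Xᵀ) * Wᵀ) j j) / 2 -
        ((W * (X * Xᵀ) * Wᵀ) i i - (W * (X * Xᵀ) * Wᵀ) j j) ^ 2 / (4 * d) := by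
    filter_upwards [hμ.2.1] with W hW
    rw [rowNorm, rowNorm, hdiag, hdiag]
    refine sqrt_mul_sqrt_le (hnonneg W i) (hnonneg W j) (by positivity) ?_
    calc _ ≤ ∑ k, (W * (X * Xᵀ) * Wᵀ) k k :=
          Finset.add_le_sum (fun k _ => hnonneg W k) (Finset.mem_univ i) (Finset.mem_univ j) hij
      _ = d := (sum_diag_conj_eq_trace _ hW).trans htr
  refine (integral_mono_ae (hμ.integrable_of_continuous (by unfold rowNorm; fun_prop))
    (hμ.integrable_of_continuous (by fun_prop)) hbound).trans ?_
  rw [integral_sub (hμ.integrable_of_continuous (by fun_prop))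
      (hμ.integrable_of_continuous (by fun_prop)), integral_div, integral_div,
    integral_add (hμ.integrable_of_continuous (by fun_prop))
      (hμ.integrable_of_continuous (by fun_prop)), hmean, hmean, hμ.integral_conj_sub_sq hA hij, heig]
  have hc := hμ.integral_conj_offDiag_sq_eq hA hij
  rw [htr] at hc
  have hS : (d - 1) * (d + 2) * ∫ W, (W * (X * Xᵀ) * Wᵀ) i j ^ 2 ∂μ =
      (X * Xᵀ * (X * Xᵀ)).trace - d :=
    mul_left_cancel₀ (a := (d : ℝ)) (by positivity) (by linear_combination hc)
  rw [← hS]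
  have h1 : (0 : ℝ) < d - 1 := by linarith
  have hpos : 0 ≤ ∫ W, (W * (X * Xᵀ) * Wᵀ) i j ^ 2 ∂μ := integral_nonneg fun W => sq_nonneg _
  generalize ∫ W, (W * (X * Xᵀ) * Wᵀ) i j ^ 2 ∂μ = c at hpos ⊢
  have hl : 4 * c / (4 * d) = c / d := by field_simp
  have hr : (d - 1) * (d + 2) * c / (2 * d * (d + 2) * (d - 1)) = c / d / 2 := by
    field_simp
  rw [hl, hr]
  have : 0 ≤ c / d := by positivity
  linarith
end
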